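/- Let R' = MvPolynomial over the six indices {(i,j) : i ≤ j in Fin 3} over ℂ with its standard grading (polynomial functions on complex symmetric 3×3 matrices), let W = {A ∈ Matrix (Fin 3) (Fin 3) ℂ : Aᵀ = A and (I₃, A, A²) is linearly dependent over ℂ}, and let I(W) ⊂ R' be its vanishing ideal. For d ∈ ℕ, let h_d = dim_ℂ R'_d − dim_ℂ (I(W) ∩ R'_d), the dimension of the degree-d component of R'/I(W). Then in the formal power series ring ℚ[[t]] (or ℤ[[t]]): (1 − t)⁴ · Σ_{d≥0} h_d t^d = 1 + 2t + 3t² − 3t³ + t⁴. -/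

import Mathlib

open Matrix

/-!
Over an algebraically closed field, a symmetric `3 × 3` matrix whose minimal polynomial has degree
at most `2` is `c • 1 + v vᵀ`: it differs from some scalar matrix by a symmetric matrix of rank at
most one. Hence the coordinate ring in question is the subalgebra of `K[λ, x₁, x₂, x₃]` generated
by the entries of `λ • 1 + x xᵀ`. Giving `λ` weight `2` and each `xᵢ` weight `1`, its degree-`d`
part consists of polynomials of weight `2d`. Minors of the generic matrix show that, together with
`λᵈ`, it contains all of them, while the functional `f ↦ (2 ∂f/∂λ - Σᵢ ∂²f/∂xᵢ²)(1, 0)` kills it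
but not `λᵈ` when `d ≥ 1`. So it has codimension one in weight `2d` for `d ≥ 1`, and the Hilbert
series follows by counting monomials.
-/

section ScalarAddRankOne

variable {R S n : Type*} [DecidableEq n] [CommRing R] [CommRing S]

/-- The symmetric matrix `c • 1 + v vᵀ`. For `3 × 3` matrices over an algebraically closed field
these are exactly the symmetric matrices whose minimal polynomial has degree at most `2`. -/
def scalarAddRankOne (c : R) (v : n → R) : Matrix n n R :=
  c • 1 + vecMulVec v v

lemma scalarAddRankOne_apply (c : R) (v : n → R) (i j : n) :
    scalarAddRankOne c v i j = (if i = j then c else 0) + v i * v j := by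
  simp [scalarAddRankOne, vecMulVec_apply, Matrix.one_apply]

lemma scalarAddRankOne_apply_self (c : R) (v : n → R) (i : n) :
    scalarAddRankOne c v i i = c + v i * v i := by
  simp [scalarAddRankOne_apply]

lemma scalarAddRankOne_apply_of_ne (c : R) (v : n → R) {i j : n} (hij : i ≠ j) :
    scalarAddRankOne c v i j = v i * v j := by
  simp [scalarAddRankOne_apply, hij]

lemma transpose_scalarAddRankOne (c : R) (v : n → R) :
    (scalarAddRankOne c v)ᵀ = scalarAddRankOne c v := by
  simp [scalarAddRankOne, transpose_vecMulVec]

lemma map_scalarAddRankOne_apply (f : R →+* S) (c : R) (v : n → R) (i j : n) :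
    f (scalarAddRankOne c v i j) = scalarAddRankOne (f c) (fun k => f (v k)) i j := by
  simp only [scalarAddRankOne_apply, map_add, map_mul, apply_ite f, map_zero]

lemma sq_scalarAddRankOne [Fintype n] (c : R) (v : n → R) :
    scalarAddRankOne c v ^ 2 =
      (2 * c + v ⬝ᵥ v) • scalarAddRankOne c v - (c * (c + v ⬝ᵥ v)) • 1 := by
  simp only [scalarAddRankOne, sq, add_mul, mul_add, smul_mul_assoc, mul_smul_comm, one_mul,
    mul_one, vecMulVec_mul_vecMulVec, vecMulVec_smul]
  module

lemma not_linearIndependent_pow_scalarAddRankOne [Fintype n] [Nontrivial R]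
    (c : R) (v : n → R) :
    ¬ LinearIndependent R fun r : Fin 3 => scalarAddRankOne c v ^ (r : ℕ) := by
  rw [Fintype.not_linearIndependent_iff]
  refine ⟨![c * (c + v ⬝ᵥ v), -(2 * c + v ⬝ᵥ v), 1], ?_, 2, by simp⟩
  simp only [Fin.sum_univ_three, cons_val, Fin.val_zero, Fin.val_one, Fin.val_two, pow_zero,
    pow_one, sq_scalarAddRankOne]
  module

end ScalarAddRankOne

section DegenerateMatrices

variable {K n : Type*} [Field K] [Fintype n]

lemma exists_eq_vecMulVec_of_rank_le_one {m : Type*} [Finite m] {B : Matrix m n K}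
    (hB : B.rank ≤ 1) : ∃ (u : m → K) (w : n → K), B = vecMulVec u w := by
  classical
  obtain ⟨⟨u, _⟩, hu⟩ := finrank_le_one_iff.mp hB
  have exists_smul_eq_col (j : n) : ∃ a : K, a • u = B.col j := by
    obtain ⟨a, ha⟩ := hu ⟨B.mulVecLin (Pi.single j 1), ⟨_, rfl⟩⟩
    exact ⟨a, by simpa using congrArg Subtype.val ha⟩
  choose w hw using exists_smul_eq_col
  refine ⟨u, w, ext fun i j => ?_⟩
  simpa [vecMulVec_apply, mul_comm] using (congrFun (hw j) i).symm

lemma exists_eq_vecMulVec_self_of_isSymm {B : Matrix n n K} (hK : ∀ a : K, IsSquare a)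
    (hsymm : B.IsSymm) (hrank : B.rank ≤ 1) : ∃ v : n → K, B = vecMulVec v v := by
  obtain ⟨u, w, rfl⟩ := exists_eq_vecMulVec_of_rank_le_one hrank
  have swap (i j : n) : u i * w j = u j * w i := hsymm.apply j i
  by_cases hu : u = 0
  · exact ⟨0, by simp [hu]⟩
  obtain ⟨i, hi : u i ≠ 0⟩ := Function.ne_iff.mp hu
  obtain ⟨s, hs⟩ := hK (w i / u i)
  have hw : w = (s * s) • u := by
    ext j
    rw [← hs, Pi.smul_apply, smul_eq_mul]
    field_simp
    linear_combination swap i j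
  exact ⟨s • u, by rw [hw, vecMulVec_smul, smul_vecMulVec, vecMulVec_smul, smul_smul]⟩

lemma natDegree_minpoly_lt_of_not_linearIndependent_pow {A : Type*} [Ring A] [Algebra K A]
    {a : A} {d : ℕ} (h : ¬ LinearIndependent K fun r : Fin d => a ^ (r : ℕ)) :
    (minpoly K a).natDegree < d := by
  contrapose! h
  exact (linearIndependent_pow a).comp (Fin.castLE h) (Fin.castLE_injective h)

lemma not_linearIndependent_pow_map [DecidableEq n] {L : Type*} [Field L]
    [Algebra K L] {A : Matrix n n K} {d : ℕ}
    (hA : ¬ LinearIndependent K fun r : Fin d => A ^ (r : ℕ)) :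
    ¬ LinearIndependent L fun r : Fin d => A.map (algebraMap K L) ^ (r : ℕ) := by
  contrapose! hA
  let φ := (Algebra.ofId K L).mapMatrix (m := n)
  have map_pow_eq : φ.toLinearMap ∘ (fun r : Fin d => A ^ (r : ℕ)) =
      fun r : Fin d => φ A ^ (r : ℕ) := funext fun r => map_pow φ A r
  exact .of_comp φ.toLinearMap (map_pow_eq ▸ hA.restrict_scalars' K)

open Polynomial in
lemma exists_sub_mul_sub_eq_zero_of_not_linearIndependent_pow [IsAlgClosed K] {A : Type*} [Ring A]
    [Algebra K A] [Algebra.IsIntegral K A] {a : A}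
    (h : ¬ LinearIndependent K fun r : Fin 3 => a ^ (r : ℕ)) :
    ∃ p q : K, (a - algebraMap K A p) * (a - algebraMap K A q) = 0 := by
  suffices ∃ p q : K, minpoly K a ∣ (X - C p) * (X - C q) by
    obtain ⟨p, q, hpq⟩ := this
    exact ⟨p, q, by simpa using aeval_eq_zero_of_dvd_aeval_eq_zero hpq (minpoly.aeval K a)⟩
  have hsplits := IsAlgClosed.splits (minpoly K a)
  have hcard : (minpoly K a).roots.card < 3 :=
    hsplits.natDegree_eq_card_roots ▸ natDegree_minpoly_lt_of_not_linearIndependent_pow h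
  rw [hsplits.eq_prod_roots_of_monic (minpoly.monic (Algebra.IsIntegral.isIntegral a))]
  generalize (minpoly K a).roots = s at hcard
  interval_cases hs : s.card
  · exact ⟨0, 0, by simp [Multiset.card_eq_zero.mp hs]⟩
  · obtain ⟨p, rfl⟩ := Multiset.card_eq_one.mp hs
    exact ⟨p, p, by simp⟩
  · obtain ⟨p, q, rfl⟩ := Multiset.card_eq_two.mp hs
    exact ⟨p, q, by simp⟩

lemma exists_eq_scalarAddRankOne_of_isSymm [DecidableEq n] [IsAlgClosed K]
    (hn : Fintype.card n ≤ 3) {A : Matrix n n K} (hsymm : A.IsSymm)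
    (hA : ¬ LinearIndependent K fun r : Fin 3 => A ^ (r : ℕ)) :
    ∃ (c : K) (v : n → K), A = scalarAddRankOne c v := by
  obtain ⟨p, q, hpq⟩ := exists_sub_mul_sub_eq_zero_of_not_linearIndependent_pow hA
  have exists_of_rank_le_one (c : K) (hc : (A - algebraMap K _ c).rank ≤ 1) :
      ∃ (c : K) (v : n → K), A = scalarAddRankOne c v := by
    have hsub : (A - algebraMap K _ c).IsSymm := hsymm.sub (isSymm_diagonal _)
    obtain ⟨v, hv⟩ := exists_eq_vecMulVec_self_of_isSymm IsAlgClosed.exists_eq_mul_self hsub hc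
    exact ⟨c, v, by rw [scalarAddRankOne, ← hv, Algebra.algebraMap_eq_smul_one]; abel⟩
  have hrank := rank_add_rank_le_card_of_mul_eq_zero hpq
  by_cases hp : (A - algebraMap K _ p).rank ≤ 1
  · exact exists_of_rank_le_one p hp
  · exact exists_of_rank_le_one q (by lia)

end DegenerateMatrices

section VanishingIdeal

open MvPolynomial

variable {R S K n : Type*} [CommRing R] [CommRing S] [Algebra R S] [Field K]

section

variable [DecidableEq n]

variable (R n) in
/-- The entries of `λ • 1 + x xᵀ` for indeterminates `λ = X none` and `xᵢ = X (some i)`. -/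
noncomputable def genericEntry (i j : n) : MvPolynomial (Option n) R :=
  scalarAddRankOne (X none) (fun k => X (some k)) i j

lemma genericEntry_self (i : n) :
    genericEntry R n i i = X none + X (some i) * X (some i) :=
  scalarAddRankOne_apply_self ..

lemma genericEntry_of_ne {i j : n} (hij : i ≠ j) :
    genericEntry R n i j = X (some i) * X (some j) :=
  scalarAddRankOne_apply_of_ne _ _ hij

lemma genericEntry_comm (i j : n) : genericEntry R n i j = genericEntry R n j i :=
  congrFun₂ (transpose_scalarAddRankOne ..) j i

lemma aeval_genericEntry (c : S) (v : n → S) (i j : n) :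
    aeval (fun o : Option n => o.elim c v) (genericEntry R n i j) = scalarAddRankOne c v i j := by
  simpa [genericEntry] using map_scalarAddRankOne_apply
    (aeval (R := R) fun o : Option n => o.elim c v).toRingHom (X none) (fun k => X (some k)) i j

end

variable [LinearOrder n]

variable (R n) in
/-- Restriction of polynomial functions on symmetric matrices, written in the coordinates on and
above the diagonal, to the matrices `λ • 1 + x xᵀ`. -/
noncomputable def entryHom :
    MvPolynomial {p : n × n // p.1 ≤ p.2} R →ₐ[R] MvPolynomial (Option n) R :=
  aeval fun p => genericEntry R n p.1.1 p.1.2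

lemma aeval_entryHom (c : S) (v : n → S) (f : MvPolynomial {p : n × n // p.1 ≤ p.2} R) :
    aeval (fun o : Option n => o.elim c v) (entryHom R n f) =
      aeval (fun p => scalarAddRankOne c v p.1.1 p.1.2) f := by
  rw [entryHom, comp_aeval_apply]
  simp only [aeval_genericEntry]

lemma entryHom_eq_zero_of_vanishing [Infinite K] [Fintype n]
    {f : MvPolynomial {p : n × n // p.1 ≤ p.2} K}
    (hf : ∀ A : Matrix n n K, A.IsSymm → ¬ LinearIndependent K (fun r : Fin 3 => A ^ (r : ℕ)) →
      eval (fun p => A p.1.1 p.1.2) f = 0) :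
    entryHom K n f = 0 := by
  refine MvPolynomial.funext fun y => ?_
  have hy : y = fun o => o.elim (y none) fun k => y (some k) := by
    ext o
    cases o <;> rfl
  rw [map_zero, hy, ← aeval_eq_eval]
  exact (aeval_entryHom ..).trans <| hf _ (transpose_scalarAddRankOne ..)
    (not_linearIndependent_pow_scalarAddRankOne _ _)

lemma vanishing_of_entryHom_eq_zero [Fintype n] (hn : Fintype.card n ≤ 3)
    {f : MvPolynomial {p : n × n // p.1 ≤ p.2} K} (hf : entryHom K n f = 0) {A : Matrix n n K}
    (hsymm : A.IsSymm) (hA : ¬ LinearIndependent K fun r : Fin 3 => A ^ (r : ℕ)) :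
    eval (fun p => A p.1.1 p.1.2) f = 0 := by
  obtain ⟨c, v, hcv⟩ := exists_eq_scalarAddRankOne_of_isSymm hn
    (hsymm.map (algebraMap K (AlgebraicClosure K)))
    (not_linearIndependent_pow_map (L := AlgebraicClosure K) hA)
  refine (algebraMap K (AlgebraicClosure K)).injective ?_
  rw [map_zero, ← aeval_eq_eval, ← aeval_algebraMap_apply]
  have hval := aeval_entryHom c v f
  rw [hf, map_zero, ← hcv] at hval
  exact hval.symm

end VanishingIdeal

section ImageSubmodules

open MvPolynomial Submodule

variable {R n : Type*} [CommRing R]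

lemma map_homogeneousSubmodule_eq_span_pow {σ A : Type*} [CommRing A] [Algebra R A]
    (φ : MvPolynomial σ R →ₐ[R] A) (d : ℕ) :
    (homogeneousSubmodule σ R d).map φ.toLinearMap =
      span R (Set.range fun i => φ (X i)) ^ d := by
  rw [← homogeneousSubmodule_one_pow, Submodule.map_pow, homogeneousSubmodule_one_eq_span_X,
    map_span, ← Set.range_comp]
  rfl

variable (R n) in
/-- The span of the indeterminates `xᵢ = X (some i)`. -/
noncomputable def coordSpan : Submodule R (MvPolynomial (Option n) R) :=
  span R (Set.range fun i => X (some i))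

variable (R n) in
/-- The line spanned by the indeterminate `λ = X none`. -/
noncomputable def scalarSpan : Submodule R (MvPolynomial (Option n) R) :=
  R ∙ X none

lemma X_some_mem_coordSpan (i : n) : X (some i) ∈ coordSpan R n :=
  subset_span ⟨i, rfl⟩

lemma X_none_mem_scalarSpan : X none ∈ scalarSpan R n :=
  mem_span_singleton_self _

lemma coordSpan_sq : coordSpan R n ^ 2 =
    span R (Set.range fun p : n × n => X (some p.1) * X (some p.2)) := by
  rw [sq, coordSpan, span_mul_span]
  congr 1
  ext
  simp [Set.mem_mul]

lemma coordSpan_sq_le {N : Submodule R (MvPolynomial (Option n) R)} :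
    coordSpan R n ^ 2 ≤ N ↔ ∀ i j, X (some i) * X (some j) ∈ N := by
  simp [coordSpan_sq, span_le, Set.range_subset_iff]

lemma scalarSpan_pow (d : ℕ) : scalarSpan R n ^ d = R ∙ X none ^ d := by
  rw [scalarSpan, span_pow, Set.singleton_pow]

variable [DecidableEq n]

variable (R n) in
/-- The span of the entries of the generic matrix `λ • 1 + x xᵀ`. -/
noncomputable def entrySpan : Submodule R (MvPolynomial (Option n) R) :=
  span R (Set.range fun p : n × n => genericEntry R n p.1 p.2)

lemma genericEntry_mem_entrySpan (i j : n) : genericEntry R n i j ∈ entrySpan R n :=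
  subset_span ⟨(i, j), rfl⟩

lemma map_entryHom_homogeneousSubmodule {n : Type*} [LinearOrder n] (d : ℕ) :
    (homogeneousSubmodule _ R d).map (entryHom R n).toLinearMap = entrySpan R n ^ d := by
  rw [map_homogeneousSubmodule_eq_span_pow, entrySpan]
  congr 2
  simp only [entryHom, aeval_X]
  refine (Set.range_comp_subset_range _ fun p : n × n => genericEntry R n p.1 p.2).antisymm ?_
  rintro _ ⟨⟨i, j⟩, rfl⟩
  obtain hij | hij := le_total i j
  · exact ⟨⟨(i, j), hij⟩, rfl⟩
  · exact ⟨⟨(j, i), hij⟩, genericEntry_comm j i⟩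

lemma coordSpan_sq_le_scalarSpan_sup_entrySpan :
    coordSpan R n ^ 2 ≤ scalarSpan R n ⊔ entrySpan R n := by
  refine coordSpan_sq_le.mpr fun i j => ?_
  obtain rfl | hij := eq_or_ne i j
  · rw [← add_sub_cancel_left (X none) (X (some i) * X (some i)), ← genericEntry_self]
    exact sub_mem (mem_sup_right (genericEntry_mem_entrySpan i i))
      (mem_sup_left X_none_mem_scalarSpan)
  · rw [← genericEntry_of_ne hij]
    exact mem_sup_right (genericEntry_mem_entrySpan i j)

lemma scalarSpan_mul_coordSpan_le [Nontrivial n] :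
    scalarSpan R n * coordSpan R n ≤ entrySpan R n * coordSpan R n := by
  refine (span_mul_span R {X none} (Set.range fun i => X (some i))).trans_le (span_le.mpr ?_)
  rintro _ ⟨_, rfl, _, ⟨a, rfl⟩, rfl⟩
  change X none * X (some a) ∈ entrySpan R n * coordSpan R n
  obtain ⟨e, he⟩ := exists_ne a
  have key : X none * X (some a) =
      genericEntry R n e e * X (some a) - genericEntry R n e a * X (some e) := by
    rw [genericEntry_self, genericEntry_of_ne he]
    ring
  exact key ▸ sub_mem
    (mul_mem_mul (genericEntry_mem_entrySpan e e) (X_some_mem_coordSpan a))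
    (mul_mem_mul (genericEntry_mem_entrySpan e a) (X_some_mem_coordSpan e))

lemma sup_pow_mul_coordSpan_le [Nontrivial n] (d : ℕ) :
    (scalarSpan R n ⊔ entrySpan R n) ^ d * coordSpan R n ≤ entrySpan R n ^ d * coordSpan R n := by
  induction d with
  | zero => simp
  | succ d ih =>
    calc (scalarSpan R n ⊔ entrySpan R n) ^ (d + 1) * coordSpan R n
        = (scalarSpan R n ⊔ entrySpan R n) *
            ((scalarSpan R n ⊔ entrySpan R n) ^ d * coordSpan R n) := by ring
      _ ≤ (scalarSpan R n ⊔ entrySpan R n) * (entrySpan R n ^ d * coordSpan R n) := by gcongr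
      _ = entrySpan R n ^ d *
            (scalarSpan R n * coordSpan R n ⊔ entrySpan R n * coordSpan R n) := by
          rw [← Submodule.sup_mul]; ring
      _ ≤ entrySpan R n ^ d * (entrySpan R n * coordSpan R n) := by
          gcongr
          exact sup_le scalarSpan_mul_coordSpan_le le_rfl
      _ = entrySpan R n ^ (d + 1) * coordSpan R n := by ring

lemma X_none_mul_mem_entrySpan_sq (hn : 3 ≤ ENat.card n) {a b : n} (hab : a ≠ b) :
    X none * (X (some a) * X (some b)) ∈ entrySpan R n ^ 2 := by
  obtain ⟨c, hca, hcb⟩ := ENat.exists_ne_ne_of_three_le hn a b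
  have key : X none * (X (some a) * X (some b)) =
      genericEntry R n a b * genericEntry R n c c -
        genericEntry R n a c * genericEntry R n b c := by
    rw [genericEntry_self, genericEntry_of_ne hab, genericEntry_of_ne hca.symm,
      genericEntry_of_ne hcb.symm]
    ring
  rw [key, sq]
  exact sub_mem (mul_mem_mul (genericEntry_mem_entrySpan _ _) (genericEntry_mem_entrySpan _ _))
    (mul_mem_mul (genericEntry_mem_entrySpan _ _) (genericEntry_mem_entrySpan _ _))

lemma X_some_pow_four_mem_entrySpan_sq (hn : 3 ≤ ENat.card n) (a : n) :
    X (some a) ^ 4 ∈ entrySpan R n ^ 2 := by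
  obtain ⟨b, hba, -⟩ := ENat.exists_ne_ne_of_three_le hn a a
  obtain ⟨c, hca, hcb⟩ := ENat.exists_ne_ne_of_three_le hn a b
  let G := genericEntry R n
  have minor_eq {i j : n} (hij : i ≠ j) : G i i * G j j - G i j * G i j =
      X none * (X none + X (some i) ^ 2 + X (some j) ^ 2) := by
    simp only [G, genericEntry_self, genericEntry_of_ne hij]
    ring
  have minor_mem (i j : n) : G i i * G j j - G i j * G i j ∈ entrySpan R n ^ 2 := by
    rw [sq]
    exact sub_mem (mul_mem_mul (genericEntry_mem_entrySpan _ _) (genericEntry_mem_entrySpan _ _))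
      (mul_mem_mul (genericEntry_mem_entrySpan _ _) (genericEntry_mem_entrySpan _ _))
  have key : X (some a) ^ 4 = G a a * G a a - (G a a * G b b - G a b * G a b)
      - (G a a * G c c - G a c * G a c) + (G b b * G c c - G b c * G b c) := by
    rw [minor_eq hba.symm, minor_eq hca.symm, minor_eq hcb.symm]
    simp only [G, genericEntry_self]
    ring
  rw [key]
  refine add_mem (sub_mem (sub_mem ?_ (minor_mem a b)) (minor_mem a c)) (minor_mem b c)
  exact sq (G a a) ▸ pow_mem_pow _ (genericEntry_mem_entrySpan a a) 2

lemma coordSpan_pow_four_le (hn : 3 ≤ ENat.card n) :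
    coordSpan R n ^ 4 ≤ entrySpan R n ^ 2 := by
  have mem_of_ne {a b : n} (c : n) (hab : a ≠ b) :
      X (some a) * X (some b) * (X (some c) * X (some c)) ∈ entrySpan R n ^ 2 := by
    have key : X (some a) * X (some b) * (X (some c) * X (some c)) =
        genericEntry R n a b * genericEntry R n c c - X none * (X (some a) * X (some b)) := by
      rw [genericEntry_self, genericEntry_of_ne hab]
      ring
    rw [key]
    refine sub_mem ?_ (X_none_mul_mem_entrySpan_sq hn hab)
    exact sq (entrySpan R n) ▸
      mul_mem_mul (genericEntry_mem_entrySpan a b) (genericEntry_mem_entrySpan c c)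
  rw [show 4 = 2 + 2 from rfl, pow_add, coordSpan_sq, span_mul_span, span_le]
  rintro _ ⟨_, ⟨⟨a, b⟩, rfl⟩, _, ⟨⟨c, d⟩, rfl⟩, rfl⟩
  have mul_mem_of_ne {i j k l : n} (hij : i ≠ j) (hkl : k ≠ l) :
      X (some i) * X (some j) * (X (some k) * X (some l)) ∈ entrySpan R n ^ 2 := by
    rw [← genericEntry_of_ne hij, ← genericEntry_of_ne hkl, sq]
    exact mul_mem_mul (genericEntry_mem_entrySpan i j) (genericEntry_mem_entrySpan k l)
  change X (some a) * X (some b) * (X (some c) * X (some d)) ∈ entrySpan R n ^ 2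
  obtain rfl | hab := eq_or_ne a b <;> obtain rfl | hcd := eq_or_ne c d
  · obtain rfl | hac := eq_or_ne a c
    · convert X_some_pow_four_mem_entrySpan_sq (R := R) hn a using 1
      ring
    · convert mul_mem_of_ne hac hac using 1
      ring
  · rw [mul_comm]
    exact mem_of_ne a hcd
  · exact mem_of_ne c hab
  · exact mul_mem_of_ne hab hcd

lemma sup_pow_mul_coordSpan_pow_four_le (hn : 3 ≤ ENat.card n) (d : ℕ) :
    (scalarSpan R n ⊔ entrySpan R n) ^ d * coordSpan R n ^ 4 ≤ entrySpan R n ^ (d + 2) := by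
  have : Nontrivial n := ENat.one_lt_card_iff_nontrivial n |>.mp (lt_of_lt_of_le (by norm_num) hn)
  calc (scalarSpan R n ⊔ entrySpan R n) ^ d * coordSpan R n ^ 4
      = (scalarSpan R n ⊔ entrySpan R n) ^ d * coordSpan R n * coordSpan R n ^ 3 := by ring
    _ ≤ entrySpan R n ^ d * coordSpan R n * coordSpan R n ^ 3 := by
        exact mul_le_mul_left (sup_pow_mul_coordSpan_le d) _
    _ = entrySpan R n ^ d * coordSpan R n ^ 4 := by ring
    _ ≤ entrySpan R n ^ d * entrySpan R n ^ 2 := by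
        exact mul_le_mul_right (coordSpan_pow_four_le hn) _
    _ = entrySpan R n ^ (d + 2) := (pow_add ..).symm

lemma X_none_pow_mul_mem_entrySpan_pow (hn : 3 ≤ ENat.card n) (j : ℕ) {f}
    (hf : f ∈ coordSpan R n ^ 4) : X none ^ j * f ∈ entrySpan R n ^ (j + 2) :=
  sup_pow_mul_coordSpan_pow_four_le hn j <|
    mul_mem_mul (pow_mem_pow _ (mem_sup_left X_none_mem_scalarSpan) j) hf

lemma X_none_pow_mul_of_ne_mem_entrySpan_pow (hn : 3 ≤ ENat.card n) {a b : n} (hab : a ≠ b)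
    (j : ℕ) : X none ^ j * (X (some a) * X (some b)) ∈ entrySpan R n ^ (j + 1) := by
  induction j with
  | zero => simpa [← genericEntry_of_ne hab] using genericEntry_mem_entrySpan a b
  | succ j ih =>
    have key : X none ^ (j + 1) * (X (some a) * X (some b)) =
        X none ^ j * (X (some a) * X (some b)) * genericEntry R n a a
          - X none ^ j * (X (some a) ^ 3 * X (some b)) := by
      rw [genericEntry_self]
      ring
    rw [key]
    refine sub_mem (mul_mem_mul ih (genericEntry_mem_entrySpan a a)) ?_
    exact X_none_pow_mul_mem_entrySpan_pow hn j <|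
      mul_mem_mul (pow_mem_pow _ (X_some_mem_coordSpan a) 3) (X_some_mem_coordSpan b)

lemma X_none_pow_add_mem_entrySpan_pow (hn : 3 ≤ ENat.card n) (a : n) (j : ℕ) :
    X none ^ (j + 1) + (j + 1 : R) • (X none ^ j * (X (some a) * X (some a))) ∈
      entrySpan R n ^ (j + 1) := by
  induction j with
  | zero => simpa [← genericEntry_self] using genericEntry_mem_entrySpan a a
  | succ j ih =>
    have key : X none ^ (j + 1 + 1) +
          ((j + 1 : ℕ) + 1 : R) • (X none ^ (j + 1) * (X (some a) * X (some a))) =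
        (X none ^ (j + 1) + (j + 1 : R) • (X none ^ j * (X (some a) * X (some a)))) *
            genericEntry R n a a
          - (j + 1 : R) • (X none ^ j * X (some a) ^ 4) := by
      simp only [genericEntry_self, smul_eq_C_mul, map_add, map_natCast, map_one]
      push_cast
      ring
    rw [key]
    exact sub_mem (mul_mem_mul ih (genericEntry_mem_entrySpan a a)) <| smul_mem _ _ <|
      X_none_pow_mul_mem_entrySpan_pow hn j (pow_mem_pow _ (X_some_mem_coordSpan a) 4)

lemma scalarSpan_pow_mul_coordSpan_sq_le {K : Type*} [Field K] [CharZero K]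
    (hn : 3 ≤ ENat.card n) (j : ℕ) :
    scalarSpan K n ^ j * coordSpan K n ^ 2 ≤
      entrySpan K n ^ (j + 1) ⊔ scalarSpan K n ^ (j + 1) := by
  rw [scalarSpan_pow, coordSpan_sq, span_mul_span, span_le]
  rintro _ ⟨_, rfl, _, ⟨⟨a, b⟩, rfl⟩, rfl⟩
  obtain rfl | hab := eq_or_ne a b
  · refine ((entrySpan K n ^ (j + 1) ⊔ scalarSpan K n ^ (j + 1)).smul_mem_iff
      (Nat.cast_add_one_ne_zero (R := K) j)).mp ?_
    rw [← add_sub_cancel_left (X none ^ (j + 1)) (_ • _)]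
    exact sub_mem (mem_sup_left (X_none_pow_add_mem_entrySpan_pow hn a j))
      (mem_sup_right (pow_mem_pow _ X_none_mem_scalarSpan _))
  · exact mem_sup_left (X_none_pow_mul_of_ne_mem_entrySpan_pow hn hab j)

lemma scalarSpan_pow_mul_coordSpan_pow_le {K : Type*} [Field K] [CharZero K]
    (hn : 3 ≤ ENat.card n) (j k : ℕ) :
    scalarSpan K n ^ j * coordSpan K n ^ (2 * k) ≤
      entrySpan K n ^ (j + k) ⊔ scalarSpan K n ^ (j + k) := by
  match k with
  | 0 => simp
  | 1 => exact scalarSpan_pow_mul_coordSpan_sq_le hn j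
  | k + 2 =>
    refine le_sup_of_le_left ?_
    calc scalarSpan K n ^ j * coordSpan K n ^ (2 * (k + 2))
        = scalarSpan K n ^ j * (coordSpan K n ^ 2) ^ k * coordSpan K n ^ 4 := by ring
      _ ≤ (scalarSpan K n ⊔ entrySpan K n) ^ j * (scalarSpan K n ⊔ entrySpan K n) ^ k *
            coordSpan K n ^ 4 := by
          gcongr
          · exact le_sup_left
          · exact coordSpan_sq_le_scalarSpan_sup_entrySpan
      _ = (scalarSpan K n ⊔ entrySpan K n) ^ (j + k) * coordSpan K n ^ 4 := by ring
      _ ≤ entrySpan K n ^ (j + k + 2) := sup_pow_mul_coordSpan_pow_four_le hn (j + k)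

end ImageSubmodules

section Weight

open MvPolynomial Submodule

variable {R K n : Type*} [CommRing R] [Field K]

variable (n) in
/-- The grading of the parameters in which `λ = X none` has weight `2` and each `xᵢ = X (some i)`
has weight `1`, so that the entries of `λ • 1 + x xᵀ` are homogeneous of weight `2`. -/
def paramWeight : Option n → ℕ :=
  fun o => o.elim 2 fun _ => 1

lemma weight_paramWeight (s : Option n →₀ ℕ) :
    s.weight (paramWeight n) = 2 * s none + s.some.degree := by
  rw [Finsupp.weight_apply, Finsupp.sum_option_index_smul]
  simp [paramWeight, Finsupp.degree_apply, Finsupp.sum, mul_comm]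

lemma monomial_mem_scalarSpan_pow_mul_coordSpan_pow (s : Option n →₀ ℕ) :
    monomial s 1 ∈ scalarSpan R n ^ s none * coordSpan R n ^ s.some.degree := by
  have hs : (monomial s 1 : MvPolynomial (Option n) R) =
      X none ^ s none * rename some (monomial s.some 1) := by
    have hsplit : Finsupp.single none (s none) + s.some.mapDomain some = s := by
      ext (_ | i)
      · simp [Finsupp.mapDomain_of_notMem_range]
      · simp [Finsupp.mapDomain_apply (Option.some_injective n)]
    rw [rename_monomial, X_pow_eq_monomial, monomial_mul, one_mul, hsplit]
  have hrename := map_homogeneousSubmodule_eq_span_pow (rename (R := R) (some (α := n)))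
    s.some.degree
  simp only [rename_X] at hrename
  rw [hs]
  refine mul_mem_mul (pow_mem_pow _ X_none_mem_scalarSpan _) ?_
  rw [coordSpan, ← hrename]
  exact mem_map_of_mem (isHomogeneous_monomial _ rfl)

lemma scalarSpan_le_weightedHomogeneousSubmodule :
    scalarSpan R n ≤ weightedHomogeneousSubmodule R (paramWeight n) 2 :=
  (span_singleton_le_iff_mem ..).mpr (isWeightedHomogeneous_X R _ none)

lemma pow_le_weightedHomogeneousSubmodule {σ : Type*} {w : σ → ℕ} {m : ℕ}
    {N : Submodule R (MvPolynomial σ R)} (hN : N ≤ weightedHomogeneousSubmodule R w m) (d : ℕ) :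
    N ^ d ≤ weightedHomogeneousSubmodule R w (m * d) := by
  induction d with
  | zero => simpa using isWeightedHomogeneous_one R w
  | succ d ih =>
    rw [pow_succ, mul_add, mul_one]
    exact (mul_le_mul' ih hN).trans (weightedHomogeneousSubmodule_mul w _ _)

variable [DecidableEq n]

lemma entrySpan_le_weightedHomogeneousSubmodule :
    entrySpan R n ≤ weightedHomogeneousSubmodule R (paramWeight n) 2 := by
  rw [entrySpan, span_le]
  rintro _ ⟨⟨i, j⟩, rfl⟩
  have hmul : IsWeightedHomogeneous (paramWeight n) (X (some i) * X (some j)) 2 :=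
    (isWeightedHomogeneous_X R _ (some i)).mul (isWeightedHomogeneous_X R _ (some j))
  change genericEntry R n i j ∈ _
  obtain rfl | hij := eq_or_ne i j
  · exact genericEntry_self (R := R) i ▸ add_mem (isWeightedHomogeneous_X R _ none) hmul
  · exact genericEntry_of_ne (R := R) hij ▸ hmul

lemma weightedHomogeneousSubmodule_paramWeight_eq_sup [CharZero K] (hn : 3 ≤ ENat.card n) (d : ℕ) :
    weightedHomogeneousSubmodule K (paramWeight n) (2 * d) =
      entrySpan K n ^ d ⊔ scalarSpan K n ^ d := by
  refine le_antisymm (fun f hf => ?_) (sup_le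
    (pow_le_weightedHomogeneousSubmodule entrySpan_le_weightedHomogeneousSubmodule d)
    (pow_le_weightedHomogeneousSubmodule scalarSpan_le_weightedHomogeneousSubmodule d))
  rw [f.as_sum]
  refine sum_mem fun s hs => ?_
  have hweight := hf (mem_support_iff.mp hs)
  rw [weight_paramWeight] at hweight
  obtain ⟨k, hk⟩ : ∃ k, s.some.degree = 2 * k := ⟨d - s none, by lia⟩
  obtain rfl : d = s none + k := by lia
  rw [← mul_one (coeff s f), ← smul_eq_mul, ← smul_monomial]
  refine smul_mem _ _ (scalarSpan_pow_mul_coordSpan_pow_le hn _ _ ?_)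
  exact hk ▸ monomial_mem_scalarSpan_pow_mul_coordSpan_pow s

end Weight

section HeatFunctional

open MvPolynomial Submodule

variable {R n : Type*} [CommRing R]

variable (R n) in
/-- The parameters `λ = 1`, `x = 0`, at which the matrix `λ • 1 + x xᵀ` is the identity. -/
def identityParams : Option n → R :=
  fun o => o.elim 1 fun _ => 0

lemma eval_identityParams_pderiv_genericEntry [DecidableEq n] (i j k : n) :
    eval (identityParams R n) (pderiv (some k) (genericEntry R n i j)) = 0 := by
  obtain rfl | hij := eq_or_ne i j
  · simp [genericEntry_self, identityParams]
  · simp [genericEntry_of_ne hij, identityParams]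

variable [Fintype n]

variable (R n) in
/-- The functional `f ↦ (2 ∂f/∂λ - Σᵢ ∂²f/∂xᵢ²)(1, 0)` on polynomials in the parameters `(λ, x)`.
At `(1, 0)` the operators `2 ∂/∂λ` and `Σᵢ ∂²/∂xᵢ²` both induce twice the derivative in the
direction of the identity matrix, so it vanishes on polynomials in the entries of
`λ • 1 + x xᵀ`. -/
noncomputable def heatFunctional : MvPolynomial (Option n) R →ₗ[R] R :=
  (aeval (identityParams R n)).toLinearMap ∘ₗ
    (2 • (pderiv none).toLinearMap - ∑ i, (pderiv (some i)).toLinearMap ^ 2)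

lemma heatFunctional_apply (f : MvPolynomial (Option n) R) :
    heatFunctional R n f = eval (identityParams R n)
      (2 * pderiv none f - ∑ i, pderiv (some i) (pderiv (some i) f)) := by
  simp [heatFunctional, sq, aeval_eq_eval]

lemma heatFunctional_mul (f g : MvPolynomial (Option n) R) :
    heatFunctional R n (f * g) =
      heatFunctional R n f * eval (identityParams R n) g
      + eval (identityParams R n) f * heatFunctional R n g
      - 2 * ∑ i, eval (identityParams R n) (pderiv (some i) f) *
          eval (identityParams R n) (pderiv (some i) g) := by
  simp only [heatFunctional_apply, Derivation.leibniz, smul_eq_mul, map_add, map_sub, map_mul,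
    map_sum, Finset.sum_add_distrib, Finset.mul_sum, Finset.sum_mul, sub_mul, mul_sub]
  simp only [two_mul, Finset.sum_add_distrib, mul_comm]
  ring

lemma heatFunctional_X_none_pow (d : ℕ) : heatFunctional R n (X none ^ d) = 2 * d := by
  simp [heatFunctional_apply, Derivation.leibniz_pow, identityParams]

lemma heatFunctional_X_some (i : n) : heatFunctional R n (X (some i)) = 0 := by
  classical
  simp [heatFunctional_apply, pderiv_X, Pi.single_apply, apply_ite (pderiv _)]

variable [DecidableEq n]

lemma heatFunctional_X_some_mul_X_some (i j : n) :
    heatFunctional R n (X (some i) * X (some j)) = if i = j then -2 else 0 := by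
  rw [heatFunctional_mul, heatFunctional_X_some, heatFunctional_X_some]
  obtain rfl | hij := eq_or_ne i j
  · simp [pderiv_X, Pi.single_apply, apply_ite (eval _)]
  · simp [pderiv_X, Pi.single_apply, apply_ite (eval _), hij]

lemma heatFunctional_genericEntry (i j : n) : heatFunctional R n (genericEntry R n i j) = 0 := by
  obtain rfl | hij := eq_or_ne i j
  · have hX := heatFunctional_X_none_pow (R := R) (n := n) 1
    rw [pow_one] at hX
    simp [genericEntry_self, heatFunctional_X_some_mul_X_some, hX]
  · simp [genericEntry_of_ne hij, heatFunctional_X_some_mul_X_some, hij]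

lemma heatFunctional_mul_of_mem_entrySpan (f : MvPolynomial (Option n) R)
    {g : MvPolynomial (Option n) R} (hg : g ∈ entrySpan R n) :
    heatFunctional R n (f * g) = heatFunctional R n f * eval (identityParams R n) g := by
  induction hg using span_induction with
  | mem g hg =>
    obtain ⟨⟨i, j⟩, rfl⟩ := hg
    simp [heatFunctional_mul, heatFunctional_genericEntry, eval_identityParams_pderiv_genericEntry]
  | zero => simp
  | add g₁ g₂ _ _ h₁ h₂ => simp [mul_add, h₁, h₂]
  | smul a g _ h => simp [h, mul_left_comm]

lemma entrySpan_pow_le_ker_heatFunctional (d : ℕ) :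
    entrySpan R n ^ d ≤ LinearMap.ker (heatFunctional R n) := by
  induction d with
  | zero => simpa using heatFunctional_X_none_pow (R := R) (n := n) 0
  | succ d ih =>
    rw [pow_succ, mul_le]
    intro f hf g hg
    rw [LinearMap.mem_ker, heatFunctional_mul_of_mem_entrySpan f hg, LinearMap.mem_ker.mp (ih hf),
      zero_mul]

end HeatFunctional

section HilbertFunction

open MvPolynomial Submodule

variable {R K n : Type*} [CommRing R] [Field K]

lemma finrank_map_add_finrank_inf_ker {k V V' : Type*} [DivisionRing k] [AddCommGroup V]
    [Module k V] [AddCommGroup V'] [Module k V'] (f : V →ₗ[k] V') (p : Submodule k V)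
    [FiniteDimensional k p] :
    Module.finrank k (p.map f) + Module.finrank k ↥(p ⊓ LinearMap.ker f) = Module.finrank k p := by
  rw [← (f.domRestrict p).finrank_range_add_finrank_ker, LinearMap.range_domRestrict,
    LinearMap.ker_domRestrict, ← map_comap_subtype, finrank_map_subtype_eq]

lemma finrank_weightedHomogeneousSubmodule [Nontrivial R] {σ M : Type*} [AddCommMonoid M]
    (w : σ → M) (m : M) :
    Module.finrank R (weightedHomogeneousSubmodule R w m) =
      Nat.card {s : σ →₀ ℕ // s.weight w = m} := by
  rw [weightedHomogeneousSubmodule_eq_finsupp_supported]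
  exact Module.finrank_eq_nat_card_basis (basisRestrictSupport R {s | s.weight w = m})

lemma card_weight_paramWeight_eq [Fintype n] (d : ℕ) :
    Nat.card {s : Option n →₀ ℕ // s.weight (paramWeight n) = 2 * d} =
      ∑ k ∈ Finset.range (d + 1), (Fintype.card n).multichoose (2 * k) := by
  classical
  let S := (Finset.range (d + 1)).sigma fun k => Finset.univ.finsuppAntidiag (ι := n) (2 * k)
  have mem_S (k : ℕ) (t : n →₀ ℕ) : ⟨k, t⟩ ∈ S ↔ k ≤ d ∧ t.degree = 2 * k := by
    simp [S, Finsupp.degree_eq_sum, Finset.mem_finsuppAntidiag]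
  let e : {s : Option n →₀ ℕ // s.weight (paramWeight n) = 2 * d} ≃ S :=
    { toFun := fun s => ⟨⟨d - s.1 none, s.1.some⟩, by
        have := s.2
        rw [weight_paramWeight] at this
        rw [mem_S]
        lia⟩
      invFun := fun t => ⟨t.1.2.optionElim (d - t.1.1), by
        have := (mem_S _ _).mp t.2
        rw [weight_paramWeight, Finsupp.optionElim_apply_none, Finsupp.some_optionElim]
        lia⟩
      left_inv := fun s => by
        have := s.2
        rw [weight_paramWeight] at this
        ext1
        dsimp only
        rw [Nat.sub_sub_self (by lia), Finsupp.optionElim_some]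
      right_inv := fun t => by
        have := (mem_S _ _).mp t.2
        ext1
        simp only [Finsupp.optionElim_apply_none, Finsupp.some_optionElim]
        rw [Nat.sub_sub_self this.1] }
  rw [Nat.card_congr e, Nat.card_eq_finsetCard, Finset.card_sigma]
  simp only [Finset.card_finsuppAntidiag_nat_eq_multichoose, Finset.card_univ]

lemma disjoint_entrySpan_pow_scalarSpan_pow [CharZero K] [DecidableEq n] [Finite n]
    (d : ℕ) :
    Disjoint (entrySpan K n ^ (d + 1)) (scalarSpan K n ^ (d + 1)) := by
  have := Fintype.ofFinite n
  rw [scalarSpan_pow]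
  refine disjoint_span_singleton_of_notMem fun hmem => ?_
  have hker := entrySpan_pow_le_ker_heatFunctional _ hmem
  rw [LinearMap.mem_ker, heatFunctional_X_none_pow] at hker
  exact mul_ne_zero two_ne_zero (Nat.cast_ne_zero.mpr d.succ_ne_zero) hker

lemma finrank_entrySpan_pow_succ_add_one [CharZero K] [DecidableEq n] [Fintype n]
    (hn : 3 ≤ ENat.card n) (d : ℕ) :
    Module.finrank K ↥(entrySpan K n ^ (d + 1)) + 1 =
      ∑ k ∈ Finset.range (d + 2), (Fintype.card n).multichoose (2 * k) := by
  have hscalar : Module.finrank K ↥(scalarSpan K n ^ (d + 1)) = 1 := by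
    rw [scalarSpan_pow, finrank_span_singleton (pow_ne_zero _ (X_ne_zero _))]
  have hsup := weightedHomogeneousSubmodule_paramWeight_eq_sup (K := K) hn (d + 1)
  have : Module.Finite K (weightedHomogeneousSubmodule K (paramWeight n) (2 * (d + 1))) :=
    Module.Finite.iff_fg.mpr <|
      weightedHomogeneousSubmodule_fg K _ (by rintro (_ | _) <;> simp [paramWeight]) _
  have : FiniteDimensional K ↥(entrySpan K n ^ (d + 1)) :=
    finiteDimensional_of_le (le_sup_left.trans_eq hsup.symm)
  have : FiniteDimensional K ↥(scalarSpan K n ^ (d + 1)) :=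
    finiteDimensional_of_le (le_sup_right.trans_eq hsup.symm)
  have hadd := finrank_sup_add_finrank_inf_eq (entrySpan K n ^ (d + 1)) (scalarSpan K n ^ (d + 1))
  rw [(disjoint_entrySpan_pow_scalarSpan_pow d).eq_bot, finrank_bot, add_zero, ← hsup,
    finrank_weightedHomogeneousSubmodule, card_weight_paramWeight_eq, hscalar] at hadd
  exact hadd.symm

lemma finrank_entrySpan_pow_add_finrank_inf_ker [LinearOrder n] [Finite n] (d : ℕ) :
    Module.finrank K ↥(entrySpan K n ^ d) +
        Module.finrank K ↥(homogeneousSubmodule _ K d ⊓ LinearMap.ker (entryHom K n).toLinearMap) =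
      Module.finrank K (homogeneousSubmodule {p : n × n // p.1 ≤ p.2} K d) := by
  have : FiniteDimensional K (homogeneousSubmodule {p : n × n // p.1 ≤ p.2} K d) :=
    Module.Finite.iff_fg.mpr (homogeneousSubmodule_fg _ K d)
  rw [← map_entryHom_homogeneousSubmodule, finrank_map_add_finrank_inf_ker]

lemma multichoose_three_two_mul (k : ℕ) : Nat.multichoose 3 (2 * k) = (k + 1) * (2 * k + 1) := by
  have hchoose := Nat.add_one_mul_choose_eq (2 * k + 1) 1
  rw [Nat.multichoose_eq, show 3 + 2 * k - 1 = 2 * k + 2 by lia, Nat.choose_symm_add]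
  rw [Nat.choose_one_right] at hchoose
  linarith

lemma sum_range_multichoose_three_add (d : ℕ) :
    ∑ k ∈ Finset.range (d + 1), Nat.multichoose 3 (2 * k) + 3 * (2 + d).choose 2 =
      4 * (3 + d).choose 3 := by
  simp only [multichoose_three_two_mul]
  induction d with
  | zero => rfl
  | succ d ih =>
    have hchoose : (d + 2) * (d + 1) = (2 + d).choose 2 * 2 := by
      simpa [add_comm 2 d] using Nat.add_one_mul_choose_eq (d + 1) 1
    have h₂ : (2 + (d + 1)).choose 2 = (d + 2) + (2 + d).choose 2 := by
      rw [← add_assoc, Nat.choose_succ_succ' _ 1, Nat.choose_one_right, add_comm 2]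
    have h₃ : (3 + (d + 1)).choose 3 = (2 + (d + 1)).choose 2 + (3 + d).choose 3 := by
      rw [← add_assoc, Nat.choose_succ_succ' _ 2, ← add_assoc, add_right_comm]
    rw [Finset.sum_range_succ, h₃, h₂]
    linarith

lemma finrank_entrySpan_fin_three_pow [CharZero K] (d : ℕ) :
    (Module.finrank K ↥(entrySpan K (Fin 3) ^ d) : ℚ) =
      4 * (3 + d).choose 3 - 3 * (2 + d).choose 2 - 1 + if d = 0 then 1 else 0 := by
  cases d with
  | zero =>
    rw [pow_zero, one_eq_span, finrank_span_singleton one_ne_zero]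
    norm_num
  | succ d =>
    have hrank := finrank_entrySpan_pow_succ_add_one (K := K) (n := Fin 3) (by simp) d
    have hsum := sum_range_multichoose_three_add (d + 1)
    rw [Fintype.card_fin] at hrank
    rw [← hrank] at hsum
    have hsum' : (_ : ℚ) = _ := congrArg Nat.cast hsum
    push_cast at hsum' ⊢
    linear_combination hsum'

end HilbertFunction

section HilbertSeries

open PowerSeries

lemma one_sub_X_pow_four_mul_mk_choose {R : Type*} [CommRing R] :
    (1 - X : R⟦X⟧) ^ 4 * mk (fun d => 4 * ((3 + d).choose 3 : R) - 3 * ((2 + d).choose 2 : R) - 1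
        + if d = 0 then 1 else 0) =
      1 + 2 * X + 3 * X ^ 2 - 3 * X ^ 3 + X ^ 4 := by
  have hmk : mk (fun d => 4 * ((3 + d).choose 3 : R) - 3 * ((2 + d).choose 2 : R) - 1
        + if d = 0 then 1 else 0) =
      C 4 * mk (fun d => ((3 + d).choose 3 : R)) - C 3 * mk (fun d => ((2 + d).choose 2 : R))
        - mk 1 + 1 := by
    ext d
    simp [coeff_one]
  have h₃ := mk_add_choose_mul_one_sub_pow_eq_one R 3
  have h₂ := mk_add_choose_mul_one_sub_pow_eq_one R 2
  have h₀ := mk_one_mul_one_sub_eq_one R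
  rw [hmk, map_ofNat, map_ofNat]
  linear_combination 4 * h₃ - 3 * (1 - X) * h₂ - (1 - X) ^ 3 * h₀

end HilbertSeries

theorem stmt_12_general {K : Type*} [Field K] [CharZero K]
    (W : Set (Matrix (Fin 3) (Fin 3) K))
    (hW : W = {A | Aᵀ = A ∧ ¬ LinearIndependent K (fun r : Fin 3 => A ^ (r : ℕ))})
    (I : Ideal (MvPolynomial {p : Fin 3 × Fin 3 // p.1 ≤ p.2} K))
    (hI : ∀ f : MvPolynomial {p : Fin 3 × Fin 3 // p.1 ≤ p.2} K, f ∈ I ↔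
      ∀ A ∈ W, MvPolynomial.eval (fun p => A p.1.1 p.1.2) f = 0)
    (h : ℕ → ℚ)
    (hh : ∀ d : ℕ, h d =
      (Module.finrank K
        ↥(MvPolynomial.homogeneousSubmodule {p : Fin 3 × Fin 3 // p.1 ≤ p.2} K d) : ℚ)
      - (Module.finrank K
          ↥(MvPolynomial.homogeneousSubmodule {p : Fin 3 × Fin 3 // p.1 ≤ p.2} K d ⊓
            Submodule.restrictScalars K I) : ℚ)) :
    (1 - PowerSeries.X : PowerSeries ℚ) ^ 4 * PowerSeries.mk h =
      1 + 2 * PowerSeries.X + 3 * PowerSeries.X ^ 2 - 3 * PowerSeries.X ^ 3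
        + PowerSeries.X ^ 4 := by
  have hker : I.restrictScalars K = LinearMap.ker (entryHom K (Fin 3)).toLinearMap := by
    ext f
    rw [Submodule.restrictScalars_mem, hI, hW]
    exact ⟨fun hf => entryHom_eq_zero_of_vanishing fun A hsymm hA => hf A ⟨hsymm, hA⟩,
      fun hf A hA => vanishing_of_entryHom_eq_zero (Fintype.card_fin 3).le hf hA.1 hA.2⟩
  have hfun : h = fun d => (Module.finrank K ↥(entrySpan K (Fin 3) ^ d) : ℚ) := by
    ext d
    rw [hh, hker, ← finrank_entrySpan_pow_add_finrank_inf_ker, Nat.cast_add, add_sub_cancel_right]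
  rw [hfun]
  simp only [finrank_entrySpan_fin_three_pow]
  exact one_sub_X_pow_four_mul_mk_choose

/-- The Hilbert series of the coordinate ring of the variety of complex symmetric
`3×3` matrices with minimal polynomial of degree at most `2` is
`(1 + 2t + 3t² - 3t³ + t⁴) / (1-t)⁴`. -/
theorem stmt_12
    (W : Set (Matrix (Fin 3) (Fin 3) ℂ))
    (hW : W = {A | Aᵀ = A ∧ ¬ LinearIndependent ℂ (fun r : Fin 3 => A ^ (r : ℕ))})
    (I : Ideal (MvPolynomial {p : Fin 3 × Fin 3 // p.1 ≤ p.2} ℂ))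
    (hI : ∀ f : MvPolynomial {p : Fin 3 × Fin 3 // p.1 ≤ p.2} ℂ, f ∈ I ↔
      ∀ A ∈ W, MvPolynomial.eval (fun p => A p.1.1 p.1.2) f = 0)
    (h : ℕ → ℚ)
    (hh : ∀ d : ℕ, h d =
      (Module.finrank ℂ
        ↥(MvPolynomial.homogeneousSubmodule {p : Fin 3 × Fin 3 // p.1 ≤ p.2} ℂ d) : ℚ)
      - (Module.finrank ℂ
          ↥(MvPolynomial.homogeneousSubmodule {p : Fin 3 × Fin 3 // p.1 ≤ p.2} ℂ d ⊓
            Submodule.restrictScalars ℂ I) : ℚ)) :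
    (1 - PowerSeries.X : PowerSeries ℚ) ^ 4 * PowerSeries.mk h =
      1 + 2 * PowerSeries.X + 3 * PowerSeries.X ^ 2 - 3 * PowerSeries.X ^ 3
        + PowerSeries.X ^ 4 :=
  stmt_12_general W hW I hI h hh
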